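/- For smooth φ on {t+1 > |x|} ⊂ ℝ^{1+2}, with K = τ∂̄_τ + 2y^i∂̄_i, the conformal multiplier identity holds: −2τ(Kφ + φ)(□φ) = ∂̄_τ( (Kφ + φ)^2 + Σ_{i=1}^2 |τ ∂̄_i φ|^2 ) + Σ_{i=1}^2 ∂̄_i( −2τ(Kφ + φ)∂̄_i φ + 2τ y^i Σ_{j=1}^2 |∂̄_j φ|^2 ). -/

import Mathlib

noncomputable section

/-- Points of `ℝ^{1+2}`: `(t, x¹, x²)`. -/
abbrev Pt : Type := ℝ × ℝ × ℝ

/-- `∂_t`. -/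
def d0 (φ : Pt → ℝ) (p : Pt) : ℝ := fderiv ℝ φ p (1, 0, 0)
/-- `∂_1`. -/
def d1 (φ : Pt → ℝ) (p : Pt) : ℝ := fderiv ℝ φ p (0, 1, 0)
/-- `∂_2`. -/
def d2 (φ : Pt → ℝ) (p : Pt) : ℝ := fderiv ℝ φ p (0, 0, 1)

/-- `r = |x|`. -/
def rr (p : Pt) : ℝ := Real.sqrt (p.2.1 ^ 2 + p.2.2 ^ 2)

/-- The hyperbolic time `τ = √((t+1)² - |x|²)`. -/
def tau (p : Pt) : ℝ := Real.sqrt ((p.1 + 1) ^ 2 - (p.2.1 ^ 2 + p.2.2 ^ 2))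

/-- The hyperboloidal frame derivative `∂̄_τ = (τ/(t+1)) ∂_t`. -/
def btau (φ : Pt → ℝ) (p : Pt) : ℝ := (tau p / (p.1 + 1)) * d0 φ p

/-- The hyperboloidal frame derivative `∂̄_1 = ∂_1 + (x¹/(t+1)) ∂_t`. -/
def b1 (φ : Pt → ℝ) (p : Pt) : ℝ := d1 φ p + (p.2.1 / (p.1 + 1)) * d0 φ p

/-- The hyperboloidal frame derivative `∂̄_2 = ∂_2 + (x²/(t+1)) ∂_t`. -/
def b2 (φ : Pt → ℝ) (p : Pt) : ℝ := d2 φ p + (p.2.2 / (p.1 + 1)) * d0 φ p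

/-- The wave operator `□ = -∂_t² + Δ`. -/
def Box (φ : Pt → ℝ) (p : Pt) : ℝ := -d0 (d0 φ) p + d1 (d1 φ) p + d2 (d2 φ) p

/-- The conformal vector field `K = τ∂̄_τ + 2y^i∂̄_i` applied to `φ`. -/
def Kop (φ : Pt → ℝ) (p : Pt) : ℝ :=
  tau p * btau φ p + 2 * (p.2.1 * b1 φ p + p.2.2 * b2 φ p)

/-- `f` is differentiable at `p`, with the given frame derivatives. -/
structure FD (f : Pt → ℝ) (p : Pt) (a b c : ℝ) : Prop where
  diff : DifferentiableAt ℝ f p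
  ht : btau f p = a
  h1 : b1 f p = b
  h2 : b2 f p = c

theorem FD.of_has {f : Pt → ℝ} {p : Pt} {L : Pt →L[ℝ] ℝ} (h : HasFDerivAt f L p) :
    FD f p ((tau p / (p.1 + 1)) * L (1, 0, 0)) (L (0, 1, 0) + (p.2.1 / (p.1 + 1)) * L (1, 0, 0))
      (L (0, 0, 1) + (p.2.2 / (p.1 + 1)) * L (1, 0, 0)) := by
  refine ⟨h.differentiableAt, ?_, ?_, ?_⟩ <;> simp [btau, b1, b2, d0, d1, d2, h.fderiv]

theorem FD.conv {f : Pt → ℝ} {p : Pt} {a b c a' b' c' : ℝ} (h : FD f p a b c)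
    (ha : a = a') (hb : b = b') (hc : c = c') : FD f p a' b' c' := by
  subst ha hb hc; exact h

theorem FD.add {f g : Pt → ℝ} {p : Pt} {a b c a' b' c' : ℝ} (h : FD f p a b c)
    (h' : FD g p a' b' c') : FD (fun q => f q + g q) p (a + a') (b + b') (c + c') := by
  refine (FD.of_has (h.diff.hasFDerivAt.add h'.diff.hasFDerivAt)).conv ?_ ?_ ?_
  · rw [← h.ht, ← h'.ht]; simp [btau, d0]; ring
  · rw [← h.h1, ← h'.h1]; simp [b1, d0, d1]; ring
  · rw [← h.h2, ← h'.h2]; simp [b2, d0, d2]; ring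

theorem FD.mul {f g : Pt → ℝ} {p : Pt} {a b c a' b' c' : ℝ} (h : FD f p a b c)
    (h' : FD g p a' b' c') : FD (fun q => f q * g q) p (f p * a' + g p * a)
      (f p * b' + g p * b) (f p * c' + g p * c) := by
  refine (FD.of_has (h.diff.hasFDerivAt.mul h'.diff.hasFDerivAt)).conv ?_ ?_ ?_
  · rw [← h.ht, ← h'.ht]; simp [btau, d0]; ring
  · rw [← h.h1, ← h'.h1]; simp [b1, d0, d1]; ring
  · rw [← h.h2, ← h'.h2]; simp [b2, d0, d2]; ring

theorem FD.sq {f : Pt → ℝ} {p : Pt} {a b c : ℝ} (h : FD f p a b c) :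
    FD (fun q => f q ^ 2) p (2 * f p * a) (2 * f p * b) (2 * f p * c) := by
  have := h.mul h
  simp only [← pow_two] at this
  exact this.conv (by ring) (by ring) (by ring)

theorem FD.const (k : ℝ) (p : Pt) : FD (fun _ => k) p 0 0 0 :=
  (FD.of_has (hasFDerivAt_const k p)).conv (by simp) (by simp) (by simp)

theorem FD.inv {f : Pt → ℝ} {p : Pt} {a b c : ℝ} (h : FD f p a b c) (h0 : f p ≠ 0) :
    FD (fun q => (f q)⁻¹) p (-a / f p ^ 2) (-b / f p ^ 2) (-c / f p ^ 2) := by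
  have := (hasDerivAt_inv h0).comp_hasFDerivAt p h.diff.hasFDerivAt
  refine (FD.of_has this).conv ?_ ?_ ?_
  · rw [← h.ht]; simp [btau, d0]; ring
  · rw [← h.h1]; simp [b1, d0, d1]; ring
  · rw [← h.h2]; simp [b2, d0, d2]; ring

theorem FD.sqrt {f : Pt → ℝ} {p : Pt} {a b c : ℝ} (h : FD f p a b c) (h0 : f p ≠ 0) :
    FD (fun q => √(f q)) p (a / (2 * √(f p))) (b / (2 * √(f p))) (c / (2 * √(f p))) := by
  have := h.diff.hasFDerivAt.sqrt h0
  refine (FD.of_has this).conv ?_ ?_ ?_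
  · rw [← h.ht]; simp [btau, d0]; ring
  · rw [← h.h1]; simp [b1, d0, d1]; ring
  · rw [← h.h2]; simp [b2, d0, d2]; ring

theorem FD.x (p : Pt) : FD (fun q => q.2.1) p 0 1 0 := by
  have : HasFDerivAt (fun q : Pt => q.2.1) _ p := (hasFDerivAt_snd (𝕜 := ℝ) (p := p)).fst
  exact (FD.of_has this).conv (by simp) (by simp) (by simp)

theorem FD.y (p : Pt) : FD (fun q => q.2.2) p 0 0 1 := by
  have : HasFDerivAt (fun q : Pt => q.2.2) _ p := (hasFDerivAt_snd (𝕜 := ℝ) (p := p)).snd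
  exact (FD.of_has this).conv (by simp) (by simp) (by simp)

theorem FD.s (p : Pt) : FD (fun q => q.1 + 1) p (tau p / (p.1 + 1)) (p.2.1 / (p.1 + 1))
    (p.2.2 / (p.1 + 1)) := by
  have : HasFDerivAt (fun q : Pt => q.1 + 1) _ p := (hasFDerivAt_fst (𝕜 := ℝ) (p := p)).add_const 1
  exact (FD.of_has this).conv (by simp) (by simp) (by simp)

theorem snd_symm (φ : Pt → ℝ) (hφ : ContDiff ℝ (⊤ : ℕ∞) φ) (p v w : Pt) :
    DifferentiableAt ℝ (fun q => fderiv ℝ φ q v) p ∧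
    fderiv ℝ (fun q => fderiv ℝ φ q v) p w = fderiv ℝ (fun q => fderiv ℝ φ q w) p v := by
  have hd : DifferentiableAt ℝ (fderiv ℝ φ) p :=
    ((hφ.fderiv_right (m := 1) (by norm_cast)).differentiable (by simp)).differentiableAt
  have key : ∀ v : Pt, HasFDerivAt (fun q => fderiv ℝ φ q v)
      ((fderiv ℝ (fderiv ℝ φ) p).flip v) p := by
    intro v
    have := hd.hasFDerivAt.clm_apply (hasFDerivAt_const v p)
    simpa using this
  refine ⟨(key v).differentiableAt, ?_⟩
  rw [(key v).fderiv, (key w).fderiv]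
  have hs : IsSymmSndFDerivAt ℝ φ p :=
    hφ.contDiffAt.isSymmSndFDerivAt (by simp; norm_cast)
  simpa using hs w v

/-- the conformal multiplier identity
`-2τ(Kφ+φ)(□φ) = ∂̄_τ((Kφ+φ)² + Σ|τ∂̄_iφ|²) + Σ_i ∂̄_i(-2τ(Kφ+φ)∂̄_iφ + 2τy^iΣ_j|∂̄_jφ|²)`. -/
theorem conformal_multiplier_identity (φ : Pt → ℝ) (hφ : ContDiff ℝ (⊤ : ℕ∞) φ)
    (p : Pt) (hp : rr p < p.1 + 1) :
    -2 * tau p * (Kop φ p + φ p) * Box φ p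
      = btau (fun q => (Kop φ q + φ q) ^ 2
            + (tau q * b1 φ q) ^ 2 + (tau q * b2 φ q) ^ 2) p
        + b1 (fun q => -2 * tau q * (Kop φ q + φ q) * b1 φ q
            + 2 * tau q * q.2.1 * ((b1 φ q) ^ 2 + (b2 φ q) ^ 2)) p
        + b2 (fun q => -2 * tau q * (Kop φ q + φ q) * b2 φ q
            + 2 * tau q * q.2.2 * ((b1 φ q) ^ 2 + (b2 φ q) ^ 2)) p := by
  have hs : 0 < p.1 + 1 := lt_of_le_of_lt (Real.sqrt_nonneg _) hp
  have hq : 0 < (p.1 + 1) ^ 2 - (p.2.1 ^ 2 + p.2.2 ^ 2) := by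
    have := (Real.sqrt_lt' hs).1 hp
    linarith
  have hT : 0 < tau p := Real.sqrt_pos.2 hq
  have hT2 : tau p ^ 2 = (p.1 + 1) ^ 2 - (p.2.1 ^ 2 + p.2.2 ^ 2) := Real.sq_sqrt hq.le
  have hs0 := hs.ne'
  have hT0 := hT.ne'
  have Ft : FD tau p 1 0 0 := by
    have h1 := ((FD.s p).sq.add ((FD.const (-1) p).mul ((FD.x p).sq.add (FD.y p).sq)))
    have h2 := h1.sqrt (by intro h; linarith)
    have e : tau = fun q : Pt => √((q.1 + 1) ^ 2 + -1 * (q.2.1 ^ 2 + q.2.2 ^ 2)) := by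
      funext q; simp [tau, sub_eq_add_neg]
    rw [e]
    have e' := congrFun e p
    rw [← e'] at h2
    exact h2.conv (by field_simp; ring) (by field_simp; ring) (by field_simp; ring)
  have hA := fun w => snd_symm φ hφ p (1, 0, 0) w
  have hB := fun w => snd_symm φ hφ p (0, 1, 0) w
  have hC := fun w => snd_symm φ hφ p (0, 0, 1) w
  have FA : FD (d0 φ) p _ _ _ := ⟨(hA 0).1, rfl, rfl, rfl⟩
  have FB : FD (d1 φ) p _ _ _ := ⟨(hB 0).1, rfl, rfl, rfl⟩
  have FC : FD (d2 φ) p _ _ _ := ⟨(hC 0).1, rfl, rfl, rfl⟩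
  have c01 : d1 (d0 φ) p = d0 (d1 φ) p := (hA (0, 1, 0)).2
  have c02 : d2 (d0 φ) p = d0 (d2 φ) p := (hA (0, 0, 1)).2
  have c12 : d2 (d1 φ) p = d1 (d2 φ) p := (hB (0, 0, 1)).2
  have Fi := (FD.s p).inv hs0
  have Fu0 := (Ft.mul Fi).mul FA
  have Fv0 := FB.add (((FD.x p).mul Fi).mul FA)
  have Fw0 := FC.add (((FD.y p).mul Fi).mul FA)
  have Fφ : FD φ p (btau φ p) (b1 φ p) (b2 φ p) :=
    ⟨(hφ.differentiable (by simp)).differentiableAt, rfl, rfl, rfl⟩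
  have Fu : FD (btau φ) p (btau (btau φ) p) (btau (b1 φ) p) (btau (b2 φ) p) := by
    refine ⟨Fu0.diff, rfl, ?_, ?_⟩
    · refine Fu0.h1.trans (Eq.trans ?_ Fv0.ht.symm)
      simp only [btau, b1, b2, c01, c02, c12]
      field_simp
      ring
    · refine Fu0.h2.trans (Eq.trans ?_ Fw0.ht.symm)
      simp only [btau, b1, b2, c01, c02, c12]
      field_simp
      ring
  have Fv : FD (b1 φ) p (btau (b1 φ) p) (b1 (b1 φ) p) (b1 (b2 φ) p) := by
    refine ⟨Fv0.diff, rfl, rfl, ?_⟩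
    refine Fv0.h2.trans (Eq.trans ?_ Fw0.h1.symm)
    simp only [btau, b1, b2, c01, c02, c12]
    field_simp
    ring
  have Fw : FD (b2 φ) p (btau (b2 φ) p) (b1 (b2 φ) p) (b2 (b2 φ) p) := ⟨Fw0.diff, rfl, rfl, rfl⟩
  have hBox : tau p * Box φ p = -tau p * btau (btau φ) p - 2 * p.2.1 * btau (b1 φ) p
      - 2 * p.2.2 * btau (b2 φ) p + tau p * (b1 (b1 φ) p + b2 (b2 φ) p) - 2 * btau φ p := by
    have e1 : btau (btau φ) p = _ := Fu0.ht
    have e2 : btau (b1 φ) p = _ := Fv0.ht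
    have e3 : btau (b2 φ) p = _ := Fw0.ht
    have e4 : b1 (b1 φ) p = _ := Fv0.h1
    have e5 : b2 (b2 φ) p = _ := Fw0.h2
    rw [e1, e2, e3, e4, e5]
    simp only [btau, b1, b2, Box, c01, c02, c12]
    field_simp
    linear_combination (tau p * (p.1 + 1) * d0 (d0 φ) p - tau p * d0 φ p) * hT2
  have FM : FD (fun q => Kop φ q + φ q) p _ _ _ :=
    ((Ft.mul Fu).add ((FD.const 2 p).mul (((FD.x p).mul Fv).add ((FD.y p).mul Fw)))).add Fφ
  have G0 := (FM.sq.add (Ft.mul Fv).sq).add (Ft.mul Fw).sq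
  have G1 := ((((FD.const (-2) p).mul Ft).mul FM).mul Fv).add
    ((((FD.const 2 p).mul Ft).mul (FD.x p)).mul (Fv.sq.add Fw.sq))
  have G2 := ((((FD.const (-2) p).mul Ft).mul FM).mul Fw).add
    ((((FD.const 2 p).mul Ft).mul (FD.y p)).mul (Fv.sq.add Fw.sq))
  rw [G0.ht, G1.h1, G2.h2]
  linear_combination (-2 * (Kop φ p + φ p)) * hBox
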